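/- Suppose m = p = 2, X is an invertible 2×2 real matrix with entries X_{i1}, X_{i2} in row i, and ν_1, ν_2 > 0. Then an allocation w* = (w_1*, w_2*) ∈ S_2 satisfies h(w*) = max_{w ∈ S_2} h(w) if and only if w_i* = r_i/(r_1 + r_2) for i = 1, 2, where r_i = (ν_i (X_{i1}² + X_{i2}²))^{−1/2}. -/

import Mathlib

/-!
Write `s i = √(ν i * (X i 0 ^ 2 + X i 1 ^ 2))`. For a `2 × 2` matrix `tr M⁻¹ = tr M / det M`, so with
`K = ν 0 * ν 1 * (det X) ^ 2` one has `h(v) = K v₀ v₁ / (v₀ s₀² + v₁ s₁²)` on the simplex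
(`hFun_eq`). Since `v₀ + v₁ = 1`,
`v₀ s₀² + v₁ s₁² - (s₀ + s₁)² v₀ v₁ = (v₀ s₀ - v₁ s₁)²`,
so `h(v) ≤ K / (s₀ + s₁)²`, with equality exactly when `v₀ s₀ = v₁ s₁`, that is, when `v i` is
proportional to `r i = 1 / s i`.
-/

open Matrix

noncomputable def infoM {m p : ℕ} (X : Matrix (Fin m) (Fin p) ℝ) (ν w : Fin m → ℝ) :
    Matrix (Fin p) (Fin p) ℝ :=
  Xᵀ * Matrix.diagonal (fun i => w i * ν i) * X

noncomputable def hFun {m p : ℕ} (X : Matrix (Fin m) (Fin p) ℝ) (ν w : Fin m → ℝ) : ℝ :=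
  if 0 < (infoM X ν w).det then ((infoM X ν w)⁻¹).trace⁻¹ else 0

theorem hFun_eq (X : Matrix (Fin 2) (Fin 2) ℝ) (hX : X.det ≠ 0) (ν : Fin 2 → ℝ)
    (hν : ∀ i, 0 < ν i) (v : Fin 2 → ℝ) (hv : ∀ i, 0 ≤ v i) :
    hFun X ν v = ν 0 * ν 1 * X.det ^ 2 * (v 0 * v 1) /
      (v 0 * (ν 0 * (X 0 0 ^ 2 + X 0 1 ^ 2)) + v 1 * (ν 1 * (X 1 0 ^ 2 + X 1 1 ^ 2))) := by
  have hdet : (infoM X ν v).det = ν 0 * ν 1 * X.det ^ 2 * (v 0 * v 1) := by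
    simp only [infoM, det_mul, det_transpose, det_diagonal, Fin.prod_univ_two]
    ring
  have htr : (infoM X ν v).trace =
      v 0 * (ν 0 * (X 0 0 ^ 2 + X 0 1 ^ 2)) + v 1 * (ν 1 * (X 1 0 ^ 2 + X 1 1 ^ 2)) := by
    simp [infoM, Matrix.trace_fin_two, Matrix.mul_apply, Fin.sum_univ_two, Matrix.diagonal_apply]
    ring
  have hinv : ((infoM X ν v)⁻¹).trace = (infoM X ν v).det⁻¹ * (infoM X ν v).trace := by
    rw [Matrix.inv_def, Matrix.trace_smul, Ring.inverse_eq_inv', smul_eq_mul,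
      Matrix.adjugate_fin_two, Matrix.trace_fin_two, Matrix.trace_fin_two]
    simp [add_comm]
  rw [← hdet, ← htr, hFun, hinv]
  split_ifs with h
  · rw [mul_inv, inv_inv, div_eq_mul_inv]
  · have h0 : 0 ≤ (infoM X ν v).det := by
      rw [hdet]
      have := hν 0
      have := hν 1
      have := hv 0
      have := hv 1
      positivity
    rw [le_antisymm (not_lt.mp h) h0, zero_div]

/-- For positive `K`, `s`, `t`, the function `K a b / (a s² + b t²)` on the simplex `a + b = 1` is at most `K / (s + t)²`, with
equality exactly when `a s = b t`. -/
theorem ratio_bound {K s t a b : ℝ} (hK : 0 < K) (hs : 0 < s) (ht : 0 < t) (ha : 0 ≤ a)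
    (hb : 0 ≤ b) (hab : a + b = 1) :
    K * (a * b) / (a * s ^ 2 + b * t ^ 2) ≤ K / (s + t) ^ 2 ∧
      (K * (a * b) / (a * s ^ 2 + b * t ^ 2) = K / (s + t) ^ 2 ↔ a * s = b * t) := by
  have hD : 0 < a * s ^ 2 + b * t ^ 2 := by
    rcases ha.eq_or_lt with h | h
    · have : b = 1 := by linarith
      subst this
      positivity
    · positivity
  have hS : 0 < (s + t) ^ 2 := by positivity
  have key : K * (a * s ^ 2 + b * t ^ 2) - K * (a * b) * (s + t) ^ 2
      = K * (a * s - b * t) ^ 2 := by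
    obtain rfl : b = 1 - a := by linarith
    ring
  rw [div_le_div_iff₀ hD hS, div_eq_div_iff hD.ne' hS.ne']
  refine ⟨by nlinarith [mul_nonneg hK.le (sq_nonneg (a * s - b * t))], fun h => ?_, fun h => ?_⟩
  · have h0 : K * (a * s - b * t) ^ 2 = 0 := by linarith
    have h1 := (mul_eq_zero.mp h0).resolve_left hK.ne'
    have h2 := pow_eq_zero_iff (two_ne_zero) |>.mp h1
    linarith
  · rw [h, sub_self] at key
    linarith

theorem stmt3 (X : Matrix (Fin 2) (Fin 2) ℝ) (hX : IsUnit X)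
    (ν : Fin 2 → ℝ) (hν : ∀ i, 0 < ν i)
    (r : Fin 2 → ℝ)
    (hr : ∀ i, r i = (Real.sqrt (ν i * (X i 0 ^ 2 + X i 1 ^ 2)))⁻¹)
    (w : Fin 2 → ℝ) (hw0 : ∀ i, 0 ≤ w i) (hw1 : ∑ i, w i = 1) :
    (∀ v : Fin 2 → ℝ, (∀ i, 0 ≤ v i) → ∑ i, v i = 1 → hFun X ν v ≤ hFun X ν w)
      ↔ ∀ i, w i = r i / (r 0 + r 1) := by
  have hd : X.det ≠ 0 := ((Matrix.isUnit_iff_isUnit_det X).mp hX).ne_zero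
  -- A zero row would make the determinant vanish.
  have hpos : ∀ i, 0 < ν i * (X i 0 ^ 2 + X i 1 ^ 2) := by
    intro i
    refine mul_pos (hν i) ?_
    by_contra hn
    have h0 : X i 0 = 0 := by nlinarith [sq_nonneg (X i 0), sq_nonneg (X i 1)]
    have h1 : X i 1 = 0 := by nlinarith [sq_nonneg (X i 0), sq_nonneg (X i 1)]
    apply hd
    refine Matrix.det_eq_zero_of_row_eq_zero i fun j => ?_
    fin_cases j
    · exact h0
    · exact h1
  obtain ⟨s, hs, hsq, hrs⟩ : ∃ s : Fin 2 → ℝ, (∀ i, 0 < s i) ∧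
      (∀ i, ν i * (X i 0 ^ 2 + X i 1 ^ 2) = s i ^ 2) ∧ ∀ i, r i = (s i)⁻¹ :=
    ⟨fun i => Real.sqrt (ν i * (X i 0 ^ 2 + X i 1 ^ 2)), fun i => Real.sqrt_pos.mpr (hpos i),
      fun i => (Real.sq_sqrt (hpos i).le).symm, hr⟩
  have hK : 0 < ν 0 * ν 1 * X.det ^ 2 := by
    have := hν 0
    have := hν 1
    positivity
  have hs0 := hs 0
  have hs1 := hs 1
  have bound : ∀ v : Fin 2 → ℝ, (∀ i, 0 ≤ v i) → ∑ i, v i = 1 →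
      hFun X ν v ≤ ν 0 * ν 1 * X.det ^ 2 / (s 0 + s 1) ^ 2 ∧
      (hFun X ν v = ν 0 * ν 1 * X.det ^ 2 / (s 0 + s 1) ^ 2 ↔ v 0 * s 0 = v 1 * s 1) := by
    intro v hv hv1
    rw [hFun_eq X hd ν hν v hv, hsq 0, hsq 1]
    exact ratio_bound hK hs0 hs1 (hv 0) (hv 1) (by rwa [Fin.sum_univ_two] at hv1)
  have hr0 : r 0 / (r 0 + r 1) = s 1 / (s 0 + s 1) := by
    rw [hrs 0, hrs 1]
    field_simp
    ring
  have hr1 : r 1 / (r 0 + r 1) = s 0 / (s 0 + s 1) := by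
    rw [hrs 0, hrs 1]
    field_simp
    ring
  have hw : w 0 + w 1 = 1 := by rwa [Fin.sum_univ_two] at hw1
  have hchar : (∀ i, w i = r i / (r 0 + r 1)) ↔ w 0 * s 0 = w 1 * s 1 := by
    rw [Fin.forall_fin_two, hr0, hr1, eq_div_iff (by positivity), eq_div_iff (by positivity)]
    obtain h1 : w 1 = 1 - w 0 := by linarith
    rw [h1]
    constructor
    · rintro ⟨h, -⟩
      linarith
    · intro h
      constructor <;> linarith
  rw [hchar, ← (bound w hw0 hw1).2]
  constructor
  · intro hmax
    refine le_antisymm (bound w hw0 hw1).1 ?_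
    -- The maximal value is attained at the claimed optimal allocation.
    have hv0 : ∀ i, 0 ≤ (![s 1 / (s 0 + s 1), s 0 / (s 0 + s 1)] : Fin 2 → ℝ) i := by
      rw [Fin.forall_fin_two]
      constructor <;> simp <;> positivity
    have hv1 : ∑ i, (![s 1 / (s 0 + s 1), s 0 / (s 0 + s 1)] : Fin 2 → ℝ) i = 1 := by
      simp [Fin.sum_univ_two]
      field_simp
      ring
    rw [← (bound _ hv0 hv1).2.mpr (by simp; ring)]
    exact hmax _ hv0 hv1
  · intro h v hv hv1
    rw [h]
    exact (bound v hv hv1).1
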